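/- arXiv:math/0602446 — 2 statements merged into one kernel-verified Lean document; each statement's English description precedes it below -/
import Mathlib

section
/- Let p be an odd prime, n ≥ 3, and u = u_{n,p} = (p^{3n} − 1)/(p − 1). In K := SL_{3n}(F_p) let v := Id_{3n} + Σ_{i=1}^n E_{i,n+i} (the block elementary matrix with an n×n identity block in block position (1,2)) and let q be the diagonal matrix with all diagonal entries 1 except −1 in positions 2n+2 and 2n+3. Then there exist two group homomorphisms i′, i″ : K → Alt(u) such that i″(q)^{−1} i′(v) i″(q) = i′(v)^{−1}, i′(q)^{−1} i″(v) i′(q) = i″(v)^{−1}, and ⟨i′(K), i″(K)⟩ = Alt(u). -/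
/-!
Write `V = X × X × Z` with `X = Z = Fⁿ`, so that `v (x, y, z) = (x + y, y, z)` while `q` acts on `Z`
only and negates a coordinate `t` of `z`. Fix `y ≠ 0` and a functional `f` with `f y ≠ 0` depending
only on the line through `y`. On the fibre over `y`, `v` translates `f x` and `q` negates `t z`. The
homogeneous involution exchanging `f x` with `t z` conjugates `q` into a map that reflects `x`
along `y`, negating `f x`, and such a map conjugates `v` to `v⁻¹`.

Let `s` be the induced permutation of the projective space and `φ` the projective action. Twisting
`s` by a transposition `τ` of two points fixed by `v` and `q` does not affect these relations, but
if a transvection `g` commutes with `s`, fixes one of the two points and moves the other, then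
`φ(g)` and its conjugate by `τ s` differ by a 3-cycle. As `φ` is primitive, Jordan's theorem shows
that the image of `φ` and its conjugate generate a group containing the alternating group. They lie
in it because every transvection is a square when `2 ≠ 0`, so that the special linear group has no
nontrivial homomorphism to `±1`.
-/

open scoped LinearAlgebra.Projectivization

section SpecialLinearGroup

open Matrix.SpecialLinearGroup

variable {ι F : Type*} [Fintype ι] [DecidableEq ι]

theorem transvection_smul_apply [CommRing F] {i j : ι} (hij : i ≠ j) (c : F) (x : ι → F) (k : ι) :
    (transvection hij c • x) k = x k + (if k = i then c * x j else 0) := by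
  rw [Matrix.SpecialLinearGroup.smul_def, Matrix.smul_eq_mulVec, transvection_coe,
    Matrix.add_mulVec, Matrix.one_mulVec, Pi.add_apply, Matrix.single_mulVec]
  by_cases hk : k = i <;> simp [hk]

variable [Field F]

theorem diag2n_eq_transvection_mul {i j : ι} (hij : i ≠ j) {c : F} (hc : c ≠ 0) :
    diag2n hij c hc = transvection hij (c * (1 - c)) * transvection hij.symm (-c⁻¹) *
      transvection hij (c - 1) * transvection hij.symm 1 := by
  refine Subtype.ext (Matrix.mulVec_injective (funext fun x => funext fun k => ?_))
  rw [diag2n_coe, Matrix.mulVec_diagonal, ← Matrix.smul_eq_mulVec,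
    ← Matrix.SpecialLinearGroup.smul_def]
  simp only [mul_smul, transvection_smul_apply, if_neg hij, if_neg hij.symm, if_true]
  by_cases hi : k = i
  · subst hi
    simp only [if_true, if_neg hij]
    field_simp
    ring
  · by_cases hj : k = j
    · subst hj
      simp only [if_true, if_neg hij.symm]
      field_simp
      ring
    · simp [hi, hj]

theorem map_eq_one_of_forall_mul_self {M : Type*} [Monoid M] (hM : ∀ m : M, m * m = 1)
    (h2 : (2 : F) ≠ 0) (f : Matrix.SpecialLinearGroup ι F →* M)
    (g : Matrix.SpecialLinearGroup ι F) : f g = 1 := by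
  obtain _ | _ := subsingleton_or_nontrivial ι
  · rw [Subsingleton.elim g 1, map_one]
  have : NeZero (2 : F) := ⟨h2⟩
  have map_transvection (i j : ι) (hij : i ≠ j) (c : F) : f (transvection hij c) = 1 := by
    rw [← add_halves c, transvection_add, map_mul, hM]
  refine diagonal_transvection_induction' (fun g => f g = 1) g (fun i j hij c hc => ?_)
    map_transvection fun A B hA hB => by rw [map_mul, hA, hB, one_mul]
  simp only [diag2n_eq_transvection_mul, map_mul, map_transvection, one_mul]

end SpecialLinearGroup

section Group

variable {G : Type*} [Group G]

theorem inv_mul_mul_eq_inv_iff {v w : G} : w⁻¹ * v * w = v⁻¹ ↔ v * w * v = w := by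
  rw [eq_inv_iff_mul_eq_one, mul_assoc, mul_assoc, inv_mul_eq_one, ← mul_assoc, eq_comm]

theorem conj_inverts_of_commute {s τ v q : G} (hs : s * s = 1)
    (hv : Commute τ v) (hq : Commute τ q) (h : v * (s * q * s) * v = s * q * s) :
    (MulAut.conj (τ * s) q)⁻¹ * v * MulAut.conj (τ * s) q = v⁻¹ ∧
      q⁻¹ * MulAut.conj (τ * s) v * q = (MulAut.conj (τ * s) v)⁻¹ := by
  have hs' : s⁻¹ = s := inv_eq_of_mul_eq_one_left hs
  have hτv : MulAut.conj τ v = v := by rw [MulAut.conj_apply, hv.eq, mul_inv_cancel_right]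
  have hq' : q = MulAut.conj (τ * s) (s * q * s) := by
    simp only [map_mul, MulAut.mul_apply, MulAut.conj_apply, hs', mul_assoc, hs]
    simp [← mul_assoc, hs, hq.eq]
  have hv' : (s * q * s)⁻¹ * v * (s * q * s) = v⁻¹ := inv_mul_mul_eq_inv_iff.2 h
  constructor
  · calc _ = MulAut.conj τ ((s * q * s)⁻¹ * v * (s * q * s)) := by
          simp only [map_mul, map_inv, hτv, MulAut.mul_apply, MulAut.conj_apply s, hs']
      _ = _ := by rw [hv', map_inv, hτv]
  · nth_rw 1 2 [hq']
    rw [← map_inv, ← map_inv, ← map_mul, ← map_mul, hv']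

end Group

section FiberSwap

variable {F X Z : Type*} [Field F] [AddCommGroup X] [Module F X] [AddCommGroup Z] [Module F Z]

/-- A linear functional that does not vanish at `y`, for `y ≠ 0`. The choice is made through
`Classical.epsilon` so that it depends only on the set of such functionals, hence only on the line
through `y`; at `y = 0` it is arbitrary. -/
noncomputable def separator (F : Type*) {X : Type*} [Field F] [AddCommGroup X] [Module F X]
    (y : X) : Module.Dual F X :=
  Classical.epsilon fun f => f y ≠ 0

theorem separator_self_ne_zero {y : X} (hy : y ≠ 0) : separator F y y ≠ 0 :=
  Classical.epsilon_spec (p := fun f : Module.Dual F X => f y ≠ 0)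
    (Module.Projective.exists_dual_ne_zero F hy)

theorem separator_smul {c : F} (hc : c ≠ 0) (y : X) : separator F (c • y) = separator F y := by
  simp [separator, hc]

/-- The scalar `c` for which translating `x` by `c • y` makes `separator F y x` equal to `t z`,
where `w = (x, y, z)` and `y ≠ 0`. At `y = 0` it takes the junk value `0`. -/
noncomputable def fiberSlope (t : Module.Dual F Z) (w : X × X × Z) : F :=
  (t w.2.2 - separator F w.2.1 w.1) / separator F w.2.1 w.2.1

/-- The map that, over each `y ≠ 0`, exchanges the coordinates `separator F y x` and `t z` of
`(x, y, z)` by moving `x` along `y` and `z` along `e`, where `t e = 1`. It is the identity over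
`y = 0`. -/
noncomputable def fiberSwap (t : Module.Dual F Z) (e : Z) (w : X × X × Z) : X × X × Z :=
  w + fiberSlope t w • (w.2.1, 0, -(separator F w.2.1 w.2.1 • e))

variable {t : Module.Dual F Z} {e : Z}

theorem fiberSwap_of_eq_zero (x : X) (z : Z) : fiberSwap t e (x, 0, z) = (x, 0, z) := by
  simp [fiberSwap]

theorem fiberSwap_of_ne_zero (x : X) {y : X} (hy : y ≠ 0) (z : Z) :
    fiberSwap t e (x, y, z) =
      (x + ((t z - separator F y x) / separator F y y) • y, y,
        z - (t z - separator F y x) • e) := by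
  simp [fiberSwap, fiberSlope, smul_smul, separator_self_ne_zero hy, sub_eq_add_neg]

theorem fiberSwap_snd_fst (w : X × X × Z) : (fiberSwap t e w).2.1 = w.2.1 := by
  simp [fiberSwap]

theorem fiberSwap_involutive (ht : t e = 1) :
    Function.Involutive (fiberSwap t e : X × X × Z → X × X × Z) := by
  rintro ⟨x, y, z⟩
  obtain rfl | hy := eq_or_ne y 0
  · simp only [fiberSwap_of_eq_zero]
  have hy' := separator_self_ne_zero (F := F) hy
  simp only [fiberSwap_of_ne_zero _ hy, map_add, map_sub, map_smul, smul_eq_mul, ht, Prod.mk.injEq,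
    true_and, div_mul_cancel₀ _ hy']
  constructor <;> match_scalars <;> field_simp <;> ring

theorem fiberSwap_smul (c : F) (w : X × X × Z) : fiberSwap t e (c • w) = c • fiberSwap t e w := by
  obtain ⟨x, y, z⟩ := w
  obtain rfl | hc := eq_or_ne c 0
  · simp only [zero_smul]
    exact fiberSwap_of_eq_zero 0 0
  obtain rfl | hy := eq_or_ne y 0
  · simp only [Prod.smul_mk, smul_zero, fiberSwap_of_eq_zero]
  have hy' := separator_self_ne_zero (F := F) hy
  simp only [Prod.smul_mk, fiberSwap_of_ne_zero _ hy, fiberSwap_of_ne_zero _ (smul_ne_zero hc hy),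
    separator_smul hc, map_smul, smul_eq_mul, Prod.mk.injEq, true_and]
  constructor <;> match_scalars <;> field_simp

theorem fiberSwap_fiberSwap_of_map_neg {Q : Z →ₗ[F] Z} (ht : t e = 1) (htQ : ∀ z, t (Q z) = -t z)
    (hQe : Q e = -e) (x : X) {y : X} (hy : y ≠ 0) (z : Z) :
    fiberSwap t e (Prod.map id (Prod.map id Q) (fiberSwap t e (x, y, z))) =
      (x - (2 * separator F y x / separator F y y) • y, y, Q z + (2 * t z) • e) := by
  have hy' := separator_self_ne_zero (F := F) hy
  simp only [fiberSwap_of_ne_zero _ hy, Prod.map_apply, id_eq, htQ, map_add, map_sub, map_smul,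
    map_neg, hQe, smul_eq_mul, ht, Prod.mk.injEq, true_and, div_mul_cancel₀ _ hy']
  constructor <;> match_scalars <;> field_simp <;> ring

theorem shear_fiberSwap_fiberSwap_shear {Q : Z →ₗ[F] Z} (ht : t e = 1)
    (htQ : ∀ z, t (Q z) = -t z) (hQe : Q e = -e) (x y : X) (z : Z) :
    fiberSwap t e (Prod.map id (Prod.map id Q) (fiberSwap t e (x + y, y, z))) + (y, 0, 0) =
      fiberSwap t e (Prod.map id (Prod.map id Q) (fiberSwap t e (x, y, z))) := by
  obtain rfl | hy := eq_or_ne y 0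
  · simp
  have hy' := separator_self_ne_zero (F := F) hy
  simp only [fiberSwap_fiberSwap_of_map_neg ht htQ hQe _ hy, map_add, Prod.mk_add_mk, add_zero,
    Prod.mk.injEq, and_true]
  rw [mul_add, add_div, mul_div_cancel_right₀ _ hy']
  module

theorem fiberSwap_map {h : Z →ₗ[F] Z} (ht : ∀ z, t (h z) = t z) (he : h e = e)
    (w : X × X × Z) : fiberSwap t e (Prod.map id (Prod.map id h) w) =
      Prod.map id (Prod.map id h) (fiberSwap t e w) := by
  simp [fiberSwap, fiberSlope, Prod.ext_iff, ht, he]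

end FiberSwap

section Projectivization

variable {K V : Type*} [DivisionRing K] [AddCommGroup V] [Module K V]

theorem ne_zero_of_involutive {f : V → V} (hf : Function.Involutive f)
    (hs : ∀ (c : K) x, f (c • x) = c • f x) {x : V} (hx : x ≠ 0) : f x ≠ 0 := fun h =>
  hx (by rw [← hf x, h, ← zero_smul K 0, hs, zero_smul, zero_smul])

/-- The permutation of projective space induced by a homogeneous, not necessarily additive,
involution of the vector space. -/
noncomputable def projectivePerm (f : V → V) (hf : Function.Involutive f)
    (hs : ∀ (c : K) x, f (c • x) = c • f x) : Equiv.Perm (ℙ K V) :=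
  Function.Involutive.toPerm
    (Projectivization.lift (fun x => .mk K (f x) (ne_zero_of_involutive hf hs x.2))
      fun x y c h => (Projectivization.mk_eq_mk_iff' ..).2 ⟨c, by rw [h, hs]⟩)
    fun P => by
      induction P using Projectivization.ind with
      | h x hx => simp [hf x]

@[simp]
theorem projectivePerm_mk {f : V → V} (hf : Function.Involutive f)
    (hs : ∀ (c : K) x, f (c • x) = c • f x) {x : V} (hx : x ≠ 0) :
    projectivePerm f hf hs (.mk K x hx) = .mk K (f x) (ne_zero_of_involutive hf hs hx) :=
  rfl

theorem projectivePerm_mul_self {f : V → V} (hf : Function.Involutive f)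
    (hs : ∀ (c : K) x, f (c • x) = c • f x) :
    projectivePerm f hf hs * projectivePerm f hf hs = 1 :=
  Equiv.ext (Function.Involutive.toPerm_involutive _)

end Projectivization

section Perm

open Equiv

theorem isThreeCycle_swap_mul_mul_swap_mul_inv {α : Type*} [Fintype α] [DecidableEq α]
    {f : Perm α} {a b : α} (hb : f b = b) (ha : f a ≠ a) :
    (swap a b * f * swap a b * f⁻¹).IsThreeCycle := by
  have hab : b ≠ a := by
    rintro rfl
    exact ha hb
  have hfab : b ≠ f a := fun h => hab (f.injective (hb.trans h))
  have key : f * swap a b * f⁻¹ = swap b (f a) := by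
    rw [← swap_apply_apply, hb, swap_comm]
  rw [mul_assoc, mul_assoc, ← mul_assoc f, key, swap_comm a b]
  exact Perm.isThreeCycle_swap_mul_swap_same hab hfab ha.symm

variable {G X : Type*} [Group G]

theorem exists_homs_alternatingGroup {Y : Type*} [Fintype X] [DecidableEq X] [Fintype Y]
    [DecidableEq Y] (e : X ≃ Y) (hG : ∀ (f : G →* ℤˣ) g, f g = 1)
    {f₁ f₂ : G →* Perm X} (htop : alternatingGroup X ≤ f₁.range ⊔ f₂.range) {v q : G}
    (h₁ : (f₂ q)⁻¹ * f₁ v * f₂ q = (f₁ v)⁻¹) (h₂ : (f₁ q)⁻¹ * f₂ v * f₁ q = (f₂ v)⁻¹) :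
    ∃ i₁ i₂ : G →* alternatingGroup Y, (i₂ q)⁻¹ * i₁ v * i₂ q = (i₁ v)⁻¹ ∧
      (i₁ q)⁻¹ * i₂ v * i₁ q = (i₂ v)⁻¹ ∧ i₁.range ⊔ i₂.range = ⊤ := by
  let lift (f : G →* Perm X) : G →* alternatingGroup X :=
    f.codRestrict _ fun g => Perm.mem_alternatingGroup.2 (hG (Perm.sign.comp f) g)
  let ε := altCongrHom e
  have lift_sup : (lift f₁).range ⊔ (lift f₂).range = ⊤ := by
    refine Subgroup.map_injective (alternatingGroup X).subtype_injective
      (le_antisymm (Subgroup.map_mono le_top) ?_)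
    rwa [Subgroup.map_sup, MonoidHom.map_range, MonoidHom.map_range, ← MonoidHom.range_eq_map,
      Subgroup.range_subtype]
  refine ⟨ε.toMonoidHom.comp (lift f₁), ε.toMonoidHom.comp (lift f₂), ?_, ?_, ?_⟩
  · have h : (lift f₂ q)⁻¹ * lift f₁ v * lift f₂ q = (lift f₁ v)⁻¹ := Subtype.ext h₁
    simpa using congrArg ε h
  · have h : (lift f₁ q)⁻¹ * lift f₂ v * lift f₁ q = (lift f₂ v)⁻¹ := Subtype.ext h₂
    simpa using congrArg ε h
  · rw [MonoidHom.range_comp, MonoidHom.range_comp, ← Subgroup.map_sup, lift_sup,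
      ← MonoidHom.range_eq_map, MonoidHom.range_eq_top]
    exact ε.surjective

variable [MulAction G X]

theorem isPreprimitive_of_range_toPermHom_le [MulAction.IsPreprimitive G X]
    {H : Subgroup (Perm X)} (h : (MulAction.toPermHom G X).range ≤ H) :
    MulAction.IsPreprimitive H X :=
  let ψ : G → H := fun g => ⟨MulAction.toPermHom G X g, h ⟨g, rfl⟩⟩
  let f : X →ₑ[ψ] X := { toFun := id, map_smul' := fun _ _ => rfl }
  .of_surjective (f := f) Function.surjective_id

theorem commute_swap_toPermHom [DecidableEq X] {g : G} {a b : X} (ha : g • a = a)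
    (hb : g • b = b) : Commute (swap a b) (MulAction.toPermHom G X g) := by
  have h := mul_swap_eq_swap_mul (MulAction.toPermHom G X g) a b
  rw [MulAction.toPermHom_apply, MulAction.toPerm_apply, MulAction.toPerm_apply, ha, hb] at h
  exact h.symm

theorem alternatingGroup_le_range_sup_range [Fintype X] [DecidableEq X]
    [MulAction.IsPreprimitive G X] {s : Perm X} {g : G} {a b : X}
    (hs : Commute s (MulAction.toPermHom G X g)) (hb : g • b = b) (ha : g • a ≠ a) :
    alternatingGroup X ≤ (MulAction.toPermHom G X).range ⊔
      ((MulAut.conj (swap a b * s)).toMonoidHom.comp (MulAction.toPermHom G X)).range := by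
  have conj_eq : MulAut.conj (swap a b * s) (MulAction.toPermHom G X g) =
      swap a b * MulAction.toPermHom G X g * swap a b := by
    rw [map_mul, MulAut.mul_apply, MulAut.conj_apply s, hs.eq, mul_inv_cancel_right,
      MulAut.conj_apply, swap_inv]
  refine Perm.alternatingGroup_le_of_isPreprimitive_of_isThreeCycle_mem
    (isPreprimitive_of_range_toPermHom_le le_sup_left)
    (isThreeCycle_swap_mul_mul_swap_mul_inv (f := MulAction.toPermHom G X g) hb ha) ?_
  rw [← conj_eq]
  exact mul_mem (Subgroup.mem_sup_right ⟨g, rfl⟩) (inv_mem (Subgroup.mem_sup_left ⟨g, rfl⟩))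

end Perm

section Projective

variable {F X Z : Type*} [Field F] [AddCommGroup X] [Module F X] [AddCommGroup Z] [Module F Z]
  {t : Module.Dual F Z} {e : Z}

/-- The permutation of projective space induced by `fiberSwap`. -/
noncomputable def fiberSwapPerm (X : Type*) [AddCommGroup X] [Module F X] (ht : t e = 1) :
    Equiv.Perm (ℙ F (X × X × Z)) :=
  projectivePerm (fiberSwap t e) (fiberSwap_involutive ht) fiberSwap_smul

open MulAction (toPermHom)

theorem shear_mul_fiberSwapPerm_conj_mul_shear {v q : SpecialLinearGroup F (X × X × Z)}
    {Q : Z →ₗ[F] Z} (hv : ∀ w : X × X × Z, v • w = w + (w.2.1, 0, 0))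
    (hq : ∀ w : X × X × Z, q • w = Prod.map id (Prod.map id Q) w) (ht : t e = 1)
    (htQ : ∀ z, t (Q z) = -t z) (hQe : Q e = -e) :
    toPermHom _ (ℙ F (X × X × Z)) v *
        (fiberSwapPerm X ht * toPermHom _ (ℙ F (X × X × Z)) q * fiberSwapPerm X ht) *
        toPermHom _ (ℙ F (X × X × Z)) v =
      fiberSwapPerm X ht * toPermHom _ (ℙ F (X × X × Z)) q * fiberSwapPerm X ht := by
  ext P
  induction P using Projectivization.ind with
  | h w hw =>
    obtain ⟨x, y, z⟩ := w
    have h := shear_fiberSwap_fiberSwap_shear ht htQ hQe x y z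
    simp [fiberSwapPerm, hv, hq, ← h, fiberSwap_snd_fst]

theorem commute_fiberSwapPerm {g : SpecialLinearGroup F (X × X × Z)} {h : Z →ₗ[F] Z}
    (hg : ∀ w : X × X × Z, g • w = Prod.map id (Prod.map id h) w) (ht : t e = 1)
    (hth : ∀ z, t (h z) = t z) (he : h e = e) :
    Commute (fiberSwapPerm X ht) (toPermHom _ (ℙ F (X × X × Z)) g) := by
  ext P
  induction P using Projectivization.ind with
  | h w hw => simp [fiberSwapPerm, hg, fiberSwap_map hth he]

theorem exists_smul_eq_add_smul {R V : Type*} [CommRing R] [AddCommGroup V] [Module R V]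
    {f : Module.Dual R V} {u : V} (hu : f u = 0) :
    ∃ g : SpecialLinearGroup R V, ∀ w : V, g • w = w + f w • u :=
  ⟨⟨LinearEquiv.transvection hu, LinearEquiv.transvection.det_eq_one hu⟩, fun w => by
    simp [SpecialLinearGroup.smul_def, LinearMap.transvection.apply]⟩

theorem exists_perm_conj_inverts_and_alternatingGroup_le {μ : Type*}
    [Fintype (ℙ F (X × X × (μ → F)))] [DecidableEq (ℙ F (X × X × (μ → F)))]
    {v q : SpecialLinearGroup F (X × X × (μ → F))} {d : μ → F} {i j k : μ} (hij : i ≠ j)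
    (hik : i ≠ k) (hjk : j ≠ k) (hd : d i = -1)
    (hv : ∀ w : X × X × (μ → F), v • w = w + (w.2.1, 0, 0))
    (hq : ∀ w : X × X × (μ → F), q • w = (w.1, w.2.1, d * w.2.2)) :
    ∃ σ : Equiv.Perm (ℙ F (X × X × (μ → F))),
      let φ := toPermHom (SpecialLinearGroup F (X × X × (μ → F))) (ℙ F (X × X × (μ → F)))
      let ψ := (MulAut.conj σ).toMonoidHom.comp φ
      (ψ q)⁻¹ * φ v * ψ q = (φ v)⁻¹ ∧ (φ q)⁻¹ * ψ v * φ q = (ψ v)⁻¹ ∧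
        alternatingGroup _ ≤ φ.range ⊔ ψ.range := by
  classical
  let t : Module.Dual F (μ → F) := LinearMap.proj i
  let e : μ → F := Pi.single i 1
  have ht : t e = 1 := Pi.single_eq_same i 1
  let line (m : μ) : ℙ F (X × X × (μ → F)) := .mk F (0, 0, Pi.single m 1) (by simp)
  have v_line (m : μ) : v • line m = line m := by simp [line, hv]
  have d_mul (m : μ) : d * Pi.single m 1 = d m • Pi.single m 1 := by
    ext l
    obtain rfl | h := eq_or_ne l m <;> simp [*]
  have q_line (m : μ) : q • line m = line m :=
    (Projectivization.mk_eq_mk_iff' ..).2 ⟨d m, by simp [hq, d_mul]⟩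
  obtain ⟨g, hg⟩ := exists_smul_eq_add_smul (R := F) (V := X × X × (μ → F))
    (f := LinearMap.proj k ∘ₗ LinearMap.snd F X (μ → F) ∘ₗ LinearMap.snd F X (X × (μ → F)))
    (u := (0, 0, Pi.single j 1)) (by simp [hjk])
  have hgj : g • line j = line j := by simp [line, hg, hjk]
  have hgk : g • line k ≠ line k := by
    intro h
    obtain ⟨c, hc⟩ := (Projectivization.mk_eq_mk_iff' ..).1 h
    simpa [hg, hjk] using congrFun (congrArg (fun w => w.2.2) hc) j
  obtain ⟨h₁, h₂⟩ := conj_inverts_of_commute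
    (projectivePerm_mul_self (fiberSwap_involutive ht) fiberSwap_smul)
    (commute_swap_toPermHom (v_line k) (v_line j)) (commute_swap_toPermHom (q_line k) (q_line j))
    (shear_mul_fiberSwapPerm_conj_mul_shear (Q := LinearMap.mulLeft F d) hv hq ht
      (fun z => by simp [t, hd]) (by simp [e, d_mul, hd]))
  refine ⟨Equiv.swap (line k) (line j) * fiberSwapPerm X ht, h₁, h₂,
    alternatingGroup_le_range_sup_range (commute_fiberSwapPerm
      (h := LinearMap.id + (LinearMap.proj k).smulRight (Pi.single j 1))
      (fun w => ?_) ht (fun z => ?_) ?_) hgj hgk⟩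
  · simp [hg, Prod.ext_iff]
  · simp [t, hij]
  · simp [e, hik.symm]

end Projective

section Coordinates

open Matrix

/-- The decomposition of `3 * n` indices into three consecutive blocks of length `n`. -/
def threeBlocks (n : ℕ) : Fin n ⊕ Fin n ⊕ Fin n ≃ Fin (3 * n) :=
  (Equiv.sumCongr (.refl _) finSumFinEquiv).trans (finSumFinEquiv.trans (finCongr (by omega)))

variable {n : ℕ}

@[simp]
theorem val_threeBlocks_inl (i : Fin n) : (threeBlocks n (.inl i) : ℕ) = i := rfl

@[simp]
theorem val_threeBlocks_inr_inl (i : Fin n) : (threeBlocks n (.inr (.inl i)) : ℕ) = n + i := rfl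

@[simp]
theorem val_threeBlocks_inr_inr (i : Fin n) :
    (threeBlocks n (.inr (.inr i)) : ℕ) = n + (n + i) := rfl

theorem sum_threeBlocks {M : Type*} [AddCommMonoid M] (f : Fin (3 * n) → M) :
    ∑ j, f j = ∑ i, f (threeBlocks n (.inl i)) +
      (∑ i, f (threeBlocks n (.inr (.inl i))) + ∑ i, f (threeBlocks n (.inr (.inr i)))) := by
  rw [← (threeBlocks n).sum_comp, Fintype.sum_sum_type, Fintype.sum_sum_type]

variable (n) (R : Type*) [CommRing R]

/-- The splitting of a vector of length `3 * n` into its three blocks of length `n`. -/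
def blockCoords : (Fin (3 * n) → R) ≃ₗ[R] (Fin n → R) × (Fin n → R) × (Fin n → R) :=
  LinearEquiv.funCongrLeft R R (threeBlocks n) ≪≫ₗ
    LinearEquiv.sumArrowLequivProdArrow (Fin n) (Fin n ⊕ Fin n) R R ≪≫ₗ
    (LinearEquiv.refl R _).prodCongr (LinearEquiv.sumArrowLequivProdArrow (Fin n) (Fin n) R R)

theorem blockCoords_apply (x : Fin (3 * n) → R) :
    blockCoords n R x = (fun i => x (threeBlocks n (.inl i)),
      fun i => x (threeBlocks n (.inr (.inl i))), fun i => x (threeBlocks n (.inr (.inr i)))) :=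
  rfl

/-- The identification of the matrix group with the special linear group of the space of triples of
blocks, which turns the block matrices at hand into maps acting on each component. -/
noncomputable def blockEquiv : Matrix.SpecialLinearGroup (Fin (3 * n)) R ≃*
    SpecialLinearGroup R ((Fin n → R) × (Fin n → R) × (Fin n → R)) :=
  Matrix.SpecialLinearGroup.toLin'_equiv.trans
    (SpecialLinearGroup.congr_linearEquiv (blockCoords n R))

variable {n R}

theorem blockEquiv_smul_blockCoords (g : Matrix.SpecialLinearGroup (Fin (3 * n)) R)
    (x : Fin (3 * n) → R) :
    blockEquiv n R g • blockCoords n R x = blockCoords n R (g.1 *ᵥ x) :=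
  congrArg (fun y => blockCoords n R (g.1 *ᵥ y)) ((blockCoords n R).symm_apply_apply x)

theorem blockEquiv_smul_of_shear {v : Matrix.SpecialLinearGroup (Fin (3 * n)) R}
    (hv : ∀ i j : Fin (3 * n), v.1 i j =
      if i = j then 1 else if (i : ℕ) < n ∧ (j : ℕ) = (i : ℕ) + n then 1 else 0)
    (w : (Fin n → R) × (Fin n → R) × (Fin n → R)) :
    blockEquiv n R v • w = w + (w.2.1, 0, 0) := by
  obtain ⟨x, rfl⟩ := (blockCoords n R).surjective w
  rw [blockEquiv_smul_blockCoords]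
  have below (i j : Fin n) : ¬ (j : ℕ) = i + n := by omega
  have middle (i j : Fin n) : n + (j : ℕ) = i + n ↔ i = j := by omega
  have above (i j : Fin n) : ¬ n + (n + (j : ℕ)) = i + n := by omega
  ext i <;> simp [blockCoords_apply, mulVec, dotProduct, sum_threeBlocks, hv, below, middle, above]

theorem blockEquiv_smul_of_diagonal {q : Matrix.SpecialLinearGroup (Fin (3 * n)) R}
    (hq : ∀ i j : Fin (3 * n), q.1 i j =
      if i = j then (if (i : ℕ) = 2 * n + 1 ∨ (i : ℕ) = 2 * n + 2 then -1 else 1) else 0)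
    (w : (Fin n → R) × (Fin n → R) × (Fin n → R)) :
    blockEquiv n R q • w = (w.1, w.2.1,
      (fun i : Fin n => if (i : ℕ) = 1 ∨ (i : ℕ) = 2 then -1 else 1) * w.2.2) := by
  obtain ⟨x, rfl⟩ := (blockCoords n R).surjective w
  rw [blockEquiv_smul_blockCoords]
  have q_mulVec (j : Fin (3 * n)) : (q.1 *ᵥ x) j =
      (if (j : ℕ) = 2 * n + 1 ∨ (j : ℕ) = 2 * n + 2 then -1 else 1) * x j := by
    simp [mulVec, dotProduct, hq]
  have top (i : Fin n) : ¬ ((i : ℕ) = 2 * n + 1 ∨ (i : ℕ) = 2 * n + 2) := by omega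
  have middle (i : Fin n) : ¬ (n + (i : ℕ) = 2 * n + 1 ∨ n + (i : ℕ) = 2 * n + 2) := by omega
  have bottom (i : Fin n) : n + (n + (i : ℕ)) = 2 * n + 1 ∨ n + (n + (i : ℕ)) = 2 * n + 2 ↔
      (i : ℕ) = 1 ∨ (i : ℕ) = 2 := by omega
  ext i <;> simp only [blockCoords_apply, q_mulVec, top, middle, bottom, val_threeBlocks_inl,
    val_threeBlocks_inr_inl, val_threeBlocks_inr_inr, if_false, one_mul, Pi.mul_apply]

end Coordinates

theorem exists_two_homs_to_alternating_general {F Y : Type*} [Field F] [Finite F] [Fintype Y]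
    [DecidableEq Y] {n : ℕ} (hn : 3 ≤ n) (h2 : (2 : F) ≠ 0)
    (hY : Nat.card Y = (Nat.card F ^ (3 * n) - 1) / (Nat.card F - 1))
    {v q : Matrix.SpecialLinearGroup (Fin (3 * n)) F}
    (hv : ∀ i j : Fin (3 * n), v.1 i j =
      if i = j then 1 else if (i : ℕ) < n ∧ (j : ℕ) = (i : ℕ) + n then 1 else 0)
    (hq : ∀ i j : Fin (3 * n), q.1 i j =
      if i = j then (if (i : ℕ) = 2 * n + 1 ∨ (i : ℕ) = 2 * n + 2 then -1 else 1) else 0) :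
    ∃ i' i'' : Matrix.SpecialLinearGroup (Fin (3 * n)) F →* alternatingGroup Y,
      (i'' q)⁻¹ * i' v * i'' q = (i' v)⁻¹ ∧
      (i' q)⁻¹ * i'' v * i' q = (i'' v)⁻¹ ∧
      i'.range ⊔ i''.range = ⊤ := by
  classical
  let W := (Fin n → F) × (Fin n → F) × (Fin n → F)
  let θ := (blockEquiv n F).toMonoidHom
  have : Fintype (ℙ F W) := Fintype.ofFinite _
  have card_W : Nat.card W = Nat.card F ^ (3 * n) := by
    rw [← Nat.card_congr (blockCoords n F).toEquiv, Nat.card_fun, Nat.card_fin]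
  obtain ⟨ε⟩ : Nonempty (ℙ F W ≃ Y) :=
    Finite.card_eq.1 (by rw [hY, Projectivization.card'', card_W])
  obtain ⟨σ, h₁, h₂, h₃⟩ := exists_perm_conj_inverts_and_alternatingGroup_le
    (i := (⟨1, by omega⟩ : Fin n)) (j := ⟨0, by omega⟩) (k := ⟨2, by omega⟩) (by simp) (by simp)
    (by simp) (by simp) (blockEquiv_smul_of_shear hv) (blockEquiv_smul_of_diagonal hq)
  have perfect (f : SpecialLinearGroup F W →* ℤˣ) (g : SpecialLinearGroup F W) : f g = 1 := by
    obtain ⟨g, rfl⟩ := (blockEquiv n F).surjective g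
    exact map_eq_one_of_forall_mul_self Int.units_mul_self h2 (f.comp θ) g
  have range_comp (f : SpecialLinearGroup F W →* alternatingGroup Y) :
      (f.comp θ).range = f.range := by
    rw [MonoidHom.range_comp, MonoidHom.range_eq_top.2 (blockEquiv n F).surjective,
      ← MonoidHom.range_eq_map]
  obtain ⟨i', i'', h₁, h₂, h₃⟩ := exists_homs_alternatingGroup ε perfect h₃ h₁ h₂
  exact ⟨i'.comp θ, i''.comp θ, h₁, h₂, by rw [range_comp, range_comp, h₃]⟩

/-- **Lemma (Kassabov–Nikolov).**  Let `p` be an odd prime, `n ≥ 3`, and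
`u = (p^{3n} - 1)/(p - 1)`.  In `K = SL_{3n}(F_p)` let `v` be the block elementary matrix
`Id + Σ_{i=1}^n E_{i, n+i}` and let `q` be the diagonal matrix with all entries `1` except
`-1` in positions `2n+2` and `2n+3` (written below with `0`-indexed rows and columns).
Then there are homomorphisms `i′, i″ : K → Alt(u)` with
`i″(q)⁻¹ i′(v) i″(q) = i′(v)⁻¹`, `i′(q)⁻¹ i″(v) i′(q) = i″(v)⁻¹`, and
`⟨i′(K), i″(K)⟩ = Alt(u)`. -/
theorem exists_two_homs_to_alternating
    (p n : ℕ) [Fact p.Prime] (hodd : Odd p) (hn : 3 ≤ n)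
    (v q : Matrix.SpecialLinearGroup (Fin (3 * n)) (ZMod p))
    (hv : ∀ i j : Fin (3 * n), (v : Matrix (Fin (3 * n)) (Fin (3 * n)) (ZMod p)) i j =
      if i = j then 1 else if (i : ℕ) < n ∧ (j : ℕ) = (i : ℕ) + n then 1 else 0)
    (hq : ∀ i j : Fin (3 * n), (q : Matrix (Fin (3 * n)) (Fin (3 * n)) (ZMod p)) i j =
      if i = j then (if (i : ℕ) = 2 * n + 1 ∨ (i : ℕ) = 2 * n + 2 then -1 else 1) else 0) :
    ∃ i' i'' : Matrix.SpecialLinearGroup (Fin (3 * n)) (ZMod p) →*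
        alternatingGroup (Fin ((p ^ (3 * n) - 1) / (p - 1))),
      (i'' q)⁻¹ * i' v * i'' q = (i' v)⁻¹ ∧
      (i' q)⁻¹ * i'' v * i' q = (i'' v)⁻¹ ∧
      i'.range ⊔ i''.range = ⊤ :=
  exists_two_homs_to_alternating_general hn
    (Ring.two_ne_zero (by rw [ZMod.ringChar_zmod_n]; exact hodd.ne_two_of_dvd_nat dvd_rfl))
    (by rw [Nat.card_fin, Nat.card_zmod]) hv hq
end

section
/- Let p be an odd prime and n ≥ 3. Let v := Id_{3n} + Σ_{i=1}^n E_{i,n+i} ∈ SL_{3n}(F_p) and let q ∈ SL_{3n}(F_p) be the diagonal matrix with all diagonal entries 1 except −1 in positions 2n+2 and 2n+3; note q and v commute. Consider the m := (p^{3n} − p^{2n})/(p(p − 1)) orbits of length p of the permutation induced by v on the projective space P of F_p^{3n}. Then the permutation induced by q fixes exactly m/p² of these p-orbits pointwise, and maps each of the remaining p-orbits onto a different p-orbit. -/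
/-!
Write `v = 1 + N`. Then `N ^ 2 = 0` gives `v ^ p = 1`, so every nontrivial orbit of `v` on points
has exactly `p` elements, and `q`, with `q ^ 2 = 1`, commutes with `v`.

If `q` maps an orbit to itself, then at each of its points `q` agrees with a power of `v`; the
orders `p` and `2` being coprime, `q` fixes that point. This settles the second claim and reduces
the first to counting the points fixed by `q` but not by `v`. Since `N * q = N`, such a point is
spanned by a vector `w` with `q w = w` and `N w ≠ 0`, that is, a vector vanishing at the two
coordinates where `q` is `-1` but not at all of the `n` coordinates read by `N`.
-/

lemma ncard_sUnion_of_forall_ncard_eq {α : Type*} [Finite α] {S : Set (Set α)} {d : ℕ}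
    (hdisj : S.PairwiseDisjoint id) (hcard : ∀ O ∈ S, O.ncard = d) :
    (⋃₀ S).ncard = S.ncard * d := by
  calc (⋃₀ S).ncard
    _ = ∑ᶠ O ∈ S, O.ncard := by
      rw [Set.sUnion_eq_biUnion]
      exact S.toFinite.ncard_biUnion (fun O _ => O.toFinite) hdisj
    _ = ∑ᶠ O ∈ S, d := finsum_mem_congr rfl hcard
    _ = S.ncard * d := by
      rw [finsum_mem_eq_finite_toFinset_sum _ S.toFinite, Finset.sum_const, smul_eq_mul,
        ← Set.ncard_eq_toFinset_card S]

section NontrivialOrbits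

open Equiv

/-- `O` is an orbit, with more than one point, of the cyclic group generated by `σ`. -/
def IsNontrivialOrbit {α : Type*} (σ : Perm α) (O : Set α) : Prop :=
  ∃ x, σ x ≠ x ∧ O = Set.range fun k : ℤ => (σ ^ k) x

variable {α : Type*} {σ τ : Perm α} {O O' : Set α} {x : α} {p : ℕ}

namespace IsNontrivialOrbit

lemma eq_range (hO : IsNontrivialOrbit σ O) (hx : x ∈ O) :
    O = Set.range fun k : ℤ => (σ ^ k) x := by
  obtain ⟨y, -, rfl⟩ := hO
  have hyx : σ.SameCycle y x := hx
  ext z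
  exact ⟨hyx.symm.trans, hyx.trans⟩

lemma apply_ne_self (hO : IsNontrivialOrbit σ O) (hx : x ∈ O) : σ x ≠ x := by
  obtain ⟨y, hy, rfl⟩ := hO
  have hyx : σ.SameCycle y x := hx
  exact hyx.apply_eq_self_iff.not.mp hy

lemma nonempty (hO : IsNontrivialOrbit σ O) : O.Nonempty := by
  obtain ⟨y, -, rfl⟩ := hO
  exact Set.range_nonempty _

lemma eq_of_mem (hO : IsNontrivialOrbit σ O) (hO' : IsNontrivialOrbit σ O')
    (hx : x ∈ O) (hx' : x ∈ O') : O = O' :=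
  (hO.eq_range hx).trans (hO'.eq_range hx').symm

lemma ncard_eq [Fact p.Prime] (hO : IsNontrivialOrbit σ O) (hσ : σ ^ p = 1) : O.ncard = p := by
  obtain ⟨x, hx, rfl⟩ := hO
  have hperiodic : Function.IsPeriodicPt (σ • ·) p x := by
    rw [Function.IsPeriodicPt, smul_iterate, hσ]
    exact one_smul _ x
  have horbit : (Set.range fun k : ℤ => (σ ^ k) x) =
      MulAction.orbit (Subgroup.zpowers σ) x := by
    ext y
    simp [MulAction.mem_orbit_iff, Subgroup.smul_def]
  rw [horbit, ← Nat.card_coe_set_eq, Nat.card_congr (MulAction.orbitZPowersEquiv σ x),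
    Nat.card_zmod, Function.minimalPeriod_eq_prime hperiodic hx]

lemma image_of_commute (hO : IsNontrivialOrbit σ O) (h : Commute σ τ) :
    IsNontrivialOrbit σ (τ '' O) := by
  obtain ⟨x, hx, rfl⟩ := hO
  have hcomm (k : ℤ) : τ ((σ ^ k) x) = (σ ^ k) (τ x) :=
    DFunLike.congr_fun (h.zpow_left k).symm.eq x
  refine ⟨τ x, ?_, ?_⟩
  · rw [← zpow_one σ, ← hcomm, zpow_one]
    exact τ.injective.ne hx
  · rw [← Set.range_comp]
    exact congrArg Set.range (funext hcomm)

lemma forall_mem_apply_eq_self (hO : IsNontrivialOrbit σ O) (h : Commute σ τ) (hx : x ∈ O)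
    (hτx : τ x = x) : ∀ y ∈ O, τ y = y := by
  rw [hO.eq_range hx]
  rintro _ ⟨k, rfl⟩
  rw [← Perm.mul_apply, ← (h.zpow_left k).eq, Perm.mul_apply, hτx]

end IsNontrivialOrbit

lemma apply_eq_self_of_sameCycle (h : Commute σ τ) (hσ : σ ^ p = 1)
    (hp : p.Coprime (orderOf τ)) (hx : σ.SameCycle x (τ x)) : τ x = x := by
  obtain ⟨k, hk⟩ := hx
  have hfix : Function.IsFixedPt ((σ ^ k)⁻¹ * τ : Perm α) x := by
    rw [Function.IsFixedPt, Perm.mul_apply, Perm.inv_eq_iff_eq, hk]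
  have hpow : ((σ ^ k)⁻¹ * τ) ^ p = τ ^ p := by
    rw [(h.zpow_left k).inv_left.mul_pow, inv_pow, ← zpow_natCast, zpow_comm, zpow_natCast, hσ,
      one_zpow, inv_one, one_mul]
  obtain ⟨m, hm⟩ := exists_pow_eq_self_of_coprime hp
  rw [← hm, ← hpow]
  exact (hfix.perm_pow p).perm_pow m

lemma IsNontrivialOrbit.image_ne (hO : IsNontrivialOrbit σ O) (h : Commute σ τ) (hσ : σ ^ p = 1)
    (hp : p.Coprime (orderOf τ)) (hfix : ¬∀ x ∈ O, τ x = x) : τ '' O ≠ O := by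
  intro hτO
  obtain ⟨x, hx⟩ := hO.nonempty
  have hτx : τ x ∈ O := hτO ▸ Set.mem_image_of_mem τ hx
  rw [hO.eq_range hx] at hτx
  exact hfix (hO.forall_mem_apply_eq_self h hx (apply_eq_self_of_sameCycle h hσ hp hτx))

lemma ncard_fixed_orbits_mul [Finite α] [Fact p.Prime] (h : Commute σ τ) (hσ : σ ^ p = 1) :
    {O | IsNontrivialOrbit σ O ∧ ∀ x ∈ O, τ x = x}.ncard * p =
      {x | τ x = x ∧ σ x ≠ x}.ncard := by
  have hdisj : {O | IsNontrivialOrbit σ O ∧ ∀ x ∈ O, τ x = x}.PairwiseDisjoint id :=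
    fun O hO O' hO' hne => Set.disjoint_left.mpr fun _ hx hx' =>
      hne (hO.1.eq_of_mem hO'.1 hx hx')
  rw [← ncard_sUnion_of_forall_ncard_eq hdisj fun O hO => hO.1.ncard_eq hσ]
  congr 1
  ext x
  constructor
  · rintro ⟨O, ⟨hO, hfix⟩, hx⟩
    exact ⟨hfix x hx, hO.apply_ne_self hx⟩
  · rintro ⟨hτx, hσx⟩
    have hO : IsNontrivialOrbit σ (Set.range fun k : ℤ => (σ ^ k) x) := ⟨x, hσx, rfl⟩
    have hx : x ∈ Set.range fun k : ℤ => (σ ^ k) x := ⟨0, rfl⟩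
    exact ⟨_, ⟨hO, hO.forall_mem_apply_eq_self h hx hτx⟩, hx⟩

end NontrivialOrbits

section Projective

open scoped LinearAlgebra.Projectivization

variable {K V : Type*} [DivisionRing K] [AddCommGroup V] [Module K V]

lemma ncard_vectors_over_points (F : Set (ℙ K V)) :
    {w : V | ∃ hw : w ≠ 0, Projectivization.mk K w hw ∈ F}.ncard =
      F.ncard * (Nat.card K - 1) := by
  let e := Projectivization.nonZeroEquivProjectivizationProdUnits K V
  have he (w : {w : V // w ≠ 0}) : (e w).1 = Projectivization.mk K w.1 w.2 := rfl
  have himage : {w : V | ∃ hw : w ≠ 0, Projectivization.mk K w hw ∈ F} =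
      (Subtype.val ∘ e.symm) '' (F ×ˢ Set.univ) := by
    ext w
    constructor
    · rintro ⟨hw, hF⟩
      exact ⟨e ⟨w, hw⟩, ⟨hF, trivial⟩, by simp⟩
    · rintro ⟨x, ⟨hF, -⟩, rfl⟩
      have hx := he (e.symm x)
      rw [e.apply_symm_apply] at hx
      exact ⟨(e.symm x).2, hx ▸ hF⟩
  rw [himage, Set.ncard_image_of_injective _ (Subtype.val_injective.comp e.symm.injective),
    Set.ncard_prod, Set.ncard_univ, Nat.card_units]

/-- `σ` is the permutation `[w] ↦ [f w]` of projective space induced by the linear map `f`. No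
injectivity of `f` is required: nothing is asked of `σ` at `[w]` when `f w = 0`. -/
def Induces (f : Module.End K V) (σ : Equiv.Perm (ℙ K V)) : Prop :=
  ∀ (w : V) (hw : w ≠ 0) (hfw : f w ≠ 0),
    σ (Projectivization.mk K w hw) = Projectivization.mk K (f w) hfw

variable {f g : Module.End K V} {σ τ : Equiv.Perm (ℙ K V)}

namespace Induces

lemma one : Induces (1 : Module.End K V) 1 := fun _ _ _ => rfl

lemma mul (hf : Induces f σ) (hg : Induces g τ) : Induces (f * g) (σ * τ) := by
  intro w hw hfgw
  have hgw : g w ≠ 0 := fun h => hfgw (by rw [Module.End.mul_apply, h, map_zero])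
  rw [Equiv.Perm.mul_apply, hg w hw hgw, hf (g w) hgw hfgw]
  rfl

lemma pow (hf : Induces f σ) (k : ℕ) : Induces (f ^ k) (σ ^ k) := by
  induction k with
  | zero => exact one
  | succ k ih => exact ih.mul hf

lemma eq_of_injective (hf : Function.Injective f) (hσ : Induces f σ) (hτ : Induces f τ) :
    σ = τ := by
  ext x
  induction x using Projectivization.ind with | h w hw => ?_
  have hfw : f w ≠ 0 := (map_ne_zero_iff f hf).mpr hw
  rw [hσ w hw hfw, hτ w hw hfw]

lemma pow_eq_one (hf : Induces f σ) {k : ℕ} (hk : f ^ k = 1) : σ ^ k = 1 :=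
  eq_of_injective Function.injective_id (hk ▸ hf.pow k) one

lemma commute (hσ : Induces f σ) (hτ : Induces g τ) (hf : Function.Injective f)
    (hg : Function.Injective g) (h : Commute f g) : Commute σ τ := by
  have hfg : Function.Injective (f * g) := hf.comp hg
  exact eq_of_injective hfg (hσ.mul hτ) (by rw [h.eq]; exact hτ.mul hσ)

lemma apply_mk_eq_self_iff (hσ : Induces f σ) (hf : Function.Injective f) {w : V} (hw : w ≠ 0) :
    σ (Projectivization.mk K w hw) = Projectivization.mk K w hw ↔ ∃ c : K, f w = c • w := by
  rw [hσ w hw ((map_ne_zero_iff f hf).mpr hw), Projectivization.mk_eq_mk_iff']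
  simp only [eq_comm]

end Induces

lemma apply_eq_self_of_sub_one_sq (hf : (f - 1) ^ 2 = 0) {w : V} {c : K} (hc : f w = c • w) :
    f w = w := by
  have hsub : (f - 1) w = (c - 1) • w := by
    rw [LinearMap.sub_apply, hc, Module.End.one_apply, sub_smul, one_smul]
  have hzero : (c - 1) • (f - 1) w = 0 := by
    rw [← map_smul, ← hsub, ← Module.End.mul_apply, ← sq, hf, LinearMap.zero_apply]
  rcases smul_eq_zero.mp hzero with h | h
  · rw [hc, sub_eq_zero.mp h, one_smul]
  · rwa [LinearMap.sub_apply, Module.End.one_apply, sub_eq_zero] at h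

lemma injective_of_sub_one_sq (hf : (f - 1) ^ 2 = 0) : Function.Injective f := by
  refine (injective_iff_map_eq_zero f).mpr fun w hw => ?_
  rw [← apply_eq_self_of_sub_one_sq hf (hw.trans (zero_smul K w).symm), hw]

lemma apply_eq_self_of_sub_one_mul (hfg : (f - 1) * g = f - 1) {w : V} (hfw : f w ≠ w) {c : K}
    (hc : g w = c • w) : g w = w := by
  have hne : (f - 1) w ≠ 0 := by
    rwa [LinearMap.sub_apply, Module.End.one_apply, sub_ne_zero]
  have hsmul : c • (f - 1) w = (1 : K) • (f - 1) w := by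
    rw [← map_smul, ← hc, ← Module.End.mul_apply, hfg, one_smul]
  rw [hc, smul_left_injective K hne hsmul, one_smul]

lemma ncard_fixed_not_fixed_points_mul (hf : (f - 1) ^ 2 = 0) (hfg : (f - 1) * g = f - 1)
    (hg : Function.Injective g) (hσ : Induces f σ) (hτ : Induces g τ) :
    {x | τ x = x ∧ σ x ≠ x}.ncard * (Nat.card K - 1) = {w | g w = w ∧ f w ≠ w}.ncard := by
  have hf_inj := injective_of_sub_one_sq hf
  rw [← ncard_vectors_over_points]
  congr 1
  ext w
  constructor
  · rintro ⟨hw, hτw, hσw⟩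
    rw [ne_eq, hσ.apply_mk_eq_self_iff hf_inj] at hσw
    have hfw : f w ≠ w := fun h => hσw ⟨1, by rw [h, one_smul]⟩
    obtain ⟨c, hc⟩ := (hτ.apply_mk_eq_self_iff hg hw).mp hτw
    exact ⟨apply_eq_self_of_sub_one_mul hfg hfw hc, hfw⟩
  · rintro ⟨hgw, hfw⟩
    have hw : w ≠ 0 := fun h => hfw (by rw [h, map_zero])
    refine ⟨hw, (hτ.apply_mk_eq_self_iff hg hw).mpr ⟨1, by rw [hgw, one_smul]⟩, ?_⟩
    rw [ne_eq, hσ.apply_mk_eq_self_iff hf_inj]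
    exact fun ⟨c, hc⟩ => hfw (apply_eq_self_of_sub_one_sq hf hc)

end Projective

lemma pow_char_eq_one_of_sub_one_sq {R : Type*} [Ring R] {p : ℕ} [Fact p.Prime] [CharP R p] {a : R}
    (ha : (a - 1) ^ 2 = 0) : a ^ p = 1 := by
  rw [← sub_eq_zero]
  calc a ^ p - 1
    _ = (a - 1) ^ p := by rw [sub_pow_char_of_commute p (Commute.one_right a), one_pow]
    _ = 0 := pow_eq_zero_of_le (Fact.out : p.Prime).two_le ha

section VanishingCoordinates

variable {ι F : Type*} [Fintype ι] [Zero F]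

lemma ncard_forall_mem_eq_zero (s : Finset ι) :
    {w : ι → F | ∀ i ∈ s, w i = 0}.ncard = Nat.card F ^ (Fintype.card ι - s.card) := by
  classical
  have hset : {w : ι → F | ∀ i ∈ s, w i = 0} =
      {w | w ∘ (Subtype.val : {i // i ∈ s} → ι) = 0} := by
    ext w
    simp [funext_iff]
  calc {w : ι → F | ∀ i ∈ s, w i = 0}.ncard
    _ = Nat.card ({i // i ∉ s} → F) := by
      rw [hset, ← Nat.card_coe_set_eq]
      exact Nat.card_congr (Equiv.subtypePreimage _ _)
    _ = Nat.card F ^ (Fintype.card ι - s.card) := by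
      rw [Nat.card_fun, Nat.card_eq_fintype_card (α := {i // i ∉ s}),
        Fintype.card_subtype_compl, Fintype.card_coe]

lemma ncard_forall_mem_eq_zero_and_not [Finite F] {s t : Finset ι} (hst : Disjoint s t) :
    {w : ι → F | (∀ i ∈ s, w i = 0) ∧ ¬∀ i ∈ t, w i = 0}.ncard =
      Nat.card F ^ (Fintype.card ι - s.card) -
        Nat.card F ^ (Fintype.card ι - (s.card + t.card)) := by
  have hsub : {w : ι → F | ∀ i ∈ s.disjUnion t hst, w i = 0} ⊆ {w | ∀ i ∈ s, w i = 0} :=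
    fun w hw i hi => hw i (Finset.mem_disjUnion.mpr (Or.inl hi))
  rw [← Finset.card_disjUnion s t hst, ← ncard_forall_mem_eq_zero, ← ncard_forall_mem_eq_zero,
    ← Set.ncard_sdiff hsub]
  congr 1
  ext w
  simp only [Set.mem_ofPred_eq, Set.mem_sdiff, Finset.mem_disjUnion, or_imp, forall_and]
  tauto

end VanishingCoordinates

section Matrices

open Matrix

/-- The matrix `N = v - 1 = ∑ E_{i,n+i}`, with rows and columns indexed from `0`. -/
def shiftMatrix (K : Type*) [Zero K] [One K] (n : ℕ) : Matrix (Fin (3 * n)) (Fin (3 * n)) K :=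
  of fun i j => if (i : ℕ) < n ∧ (j : ℕ) = i + n then 1 else 0

/-- The diagonal of `q`, so that `q = diagonal (signs K n)`; the positions `2n+2` and
`2n+3` are counted from `1`. -/
def signs (K : Type*) [One K] [Neg K] (n : ℕ) (i : Fin (3 * n)) : K :=
  if (i : ℕ) = 2 * n + 1 ∨ (i : ℕ) = 2 * n + 2 then -1 else 1

section Ring

variable (K : Type*) [Ring K] (n : ℕ)

lemma shiftMatrix_sq : shiftMatrix K n ^ 2 = 0 := by
  ext i j
  rw [sq, mul_apply, Matrix.zero_apply]
  refine Finset.sum_eq_zero fun k _ => ?_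
  simp only [shiftMatrix, of_apply]
  split_ifs <;> first | omega | simp

lemma diagonal_signs_mul_shiftMatrix :
    diagonal (signs K n) * shiftMatrix K n = shiftMatrix K n := by
  ext i j
  simp only [diagonal_mul, signs, shiftMatrix, of_apply]
  split_ifs <;> first | omega | simp

lemma shiftMatrix_mul_diagonal_signs :
    shiftMatrix K n * diagonal (signs K n) = shiftMatrix K n := by
  ext i j
  simp only [mul_diagonal, signs, shiftMatrix, of_apply]
  split_ifs <;> first | omega | simp

lemma commute_one_add_shiftMatrix_diagonal_signs :
    Commute (1 + shiftMatrix K n) (diagonal (signs K n)) := by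
  rw [commute_iff_eq, add_mul, mul_add, one_mul, mul_one, shiftMatrix_mul_diagonal_signs,
    diagonal_signs_mul_shiftMatrix]

lemma diagonal_signs_sq : diagonal (signs K n) ^ 2 = 1 := by
  rw [diagonal_pow, ← diagonal_one]
  congr 1
  ext i
  simp only [Pi.pow_apply, signs]
  split_ifs <;> simp

variable {K n}

lemma shiftMatrix_mulVec_apply (w : Fin (3 * n) → K) {i j : Fin (3 * n)} (hi : (i : ℕ) < n)
    (hj : (j : ℕ) = i + n) : (shiftMatrix K n *ᵥ w) i = w j := by
  have hentry (k : Fin (3 * n)) : shiftMatrix K n i k = if k = j then 1 else 0 := by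
    simp [shiftMatrix, hi, Fin.ext_iff, hj]
  simp [mulVec, dotProduct, hentry]

lemma shiftMatrix_mulVec_eq_zero_iff (w : Fin (3 * n) → K) :
    shiftMatrix K n *ᵥ w = 0 ↔ ∀ j : Fin (3 * n), n ≤ j ∧ j < 2 * n → w j = 0 := by
  constructor
  · rintro h j ⟨hnj, hj⟩
    rw [← shiftMatrix_mulVec_apply w (i := ⟨j - n, by omega⟩) (by grind) (by grind), h,
      Pi.zero_apply]
  · intro h
    ext i
    by_cases hi : (i : ℕ) < n
    · rw [shiftMatrix_mulVec_apply w (j := ⟨i + n, by omega⟩) hi rfl]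
      exact h _ (by grind)
    · simp [mulVec, dotProduct, shiftMatrix, hi]

variable [NoZeroDivisors K]

lemma diagonal_signs_mulVec_eq_self_iff (h2 : (2 : K) ≠ 0) (w : Fin (3 * n) → K) :
    diagonal (signs K n) *ᵥ w = w ↔
      ∀ i : Fin (3 * n), (i : ℕ) = 2 * n + 1 ∨ (i : ℕ) = 2 * n + 2 → w i = 0 := by
  simp only [funext_iff, mulVec_diagonal, signs]
  refine forall_congr' fun i => ?_
  split_ifs with hi
  · rw [neg_one_mul, neg_eq_iff_add_eq_zero, ← two_mul, mul_eq_zero_iff_left h2, imp_iff_right hi]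
  · simp [hi]

lemma ncard_diagonal_signs_fixed_not_shift_fixed [Finite K] (h2 : (2 : K) ≠ 0) (hn : 3 ≤ n) :
    {w | diagonal (signs K n) *ᵥ w = w ∧ (1 + shiftMatrix K n) *ᵥ w ≠ w}.ncard =
      Nat.card K ^ (3 * n - 2) - Nat.card K ^ (2 * n - 2) := by
  let s : Finset (Fin (3 * n)) := Finset.attachFin {2 * n + 1, 2 * n + 2} (by grind)
  let t : Finset (Fin (3 * n)) := (Finset.Ico n (2 * n)).attachFin (by grind)
  have hs : s.card = 2 := by simp [s]
  have ht : t.card = n := by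
    rw [Finset.card_attachFin, Nat.card_Ico]
    omega
  have hst : Disjoint s t := by
    rw [Finset.disjoint_left]
    simp only [s, t, Finset.mem_attachFin, Finset.mem_insert, Finset.mem_singleton, Finset.mem_Ico]
    omega
  have hset : {w | diagonal (signs K n) *ᵥ w = w ∧ (1 + shiftMatrix K n) *ᵥ w ≠ w} =
      {w : Fin (3 * n) → K | (∀ i ∈ s, w i = 0) ∧ ¬∀ i ∈ t, w i = 0} := by
    ext w
    simp [s, t, diagonal_signs_mulVec_eq_self_iff h2, add_mulVec, shiftMatrix_mulVec_eq_zero_iff]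
  rw [hset, ncard_forall_mem_eq_zero_and_not hst, hs, ht, Fintype.card_fin]
  congr 2
  omega

end Ring

section CommRing

variable {K : Type*} [CommRing K] {n : ℕ}

lemma toLinAlgEquiv'_one_add_shiftMatrix_sub_one :
    toLinAlgEquiv' (1 + shiftMatrix K n) - 1 = toLinAlgEquiv' (shiftMatrix K n) := by
  rw [map_add, map_one, add_sub_cancel_left]

lemma toLinAlgEquiv'_one_add_shiftMatrix_sub_one_sq :
    (toLinAlgEquiv' (1 + shiftMatrix K n) - 1) ^ 2 = 0 := by
  rw [toLinAlgEquiv'_one_add_shiftMatrix_sub_one, ← map_pow, shiftMatrix_sq, map_zero]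

lemma toLinAlgEquiv'_diagonal_signs_sq : toLinAlgEquiv' (diagonal (signs K n)) ^ 2 = 1 := by
  rw [← map_pow, diagonal_signs_sq, map_one]

lemma injective_toLinAlgEquiv'_diagonal_signs :
    Function.Injective (toLinAlgEquiv' (diagonal (signs K n))) :=
  ((Module.End.isUnit_iff _).mp
    (IsUnit.of_pow_eq_one toLinAlgEquiv'_diagonal_signs_sq two_ne_zero)).injective

end CommRing

section Induced

open scoped LinearAlgebra.Projectivization

variable {K : Type*} [Field K] {n : ℕ} {σ τ : Equiv.Perm (ℙ K (Fin (3 * n) → K))}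

namespace Induces

lemma one_add_shiftMatrix_pow_eq_one {p : ℕ} [Fact p.Prime] [CharP K p] [NeZero n]
    (hσ : Induces (toLinAlgEquiv' (1 + shiftMatrix K n)) σ) : σ ^ p = 1 := by
  have hsq : (1 + shiftMatrix K n - 1) ^ 2 = 0 := by rw [add_sub_cancel_left, shiftMatrix_sq]
  exact hσ.pow_eq_one (by rw [← map_pow, pow_char_eq_one_of_sub_one_sq hsq, map_one])

lemma commute_of_one_add_shiftMatrix_of_diagonal_signs
    (hσ : Induces (toLinAlgEquiv' (1 + shiftMatrix K n)) σ)
    (hτ : Induces (toLinAlgEquiv' (diagonal (signs K n))) τ) : Commute σ τ :=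
  hσ.commute hτ (injective_of_sub_one_sq toLinAlgEquiv'_one_add_shiftMatrix_sub_one_sq)
    injective_toLinAlgEquiv'_diagonal_signs
    ((commute_one_add_shiftMatrix_diagonal_signs K n).map toLinAlgEquiv')

lemma coprime_orderOf_diagonal_signs {p : ℕ} (hp : Odd p)
    (hτ : Induces (toLinAlgEquiv' (diagonal (signs K n))) τ) : p.Coprime (orderOf τ) :=
  (Nat.coprime_two_right.mpr hp).coprime_dvd_right
    (orderOf_dvd_of_pow_eq_one (hτ.pow_eq_one toLinAlgEquiv'_diagonal_signs_sq))

lemma ncard_diagonal_signs_fixed_not_shift_fixed_mul [Finite K] (h2 : (2 : K) ≠ 0) (hn : 3 ≤ n)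
    (hσ : Induces (toLinAlgEquiv' (1 + shiftMatrix K n)) σ)
    (hτ : Induces (toLinAlgEquiv' (diagonal (signs K n))) τ) :
    {x | τ x = x ∧ σ x ≠ x}.ncard * (Nat.card K - 1) =
      Nat.card K ^ (3 * n - 2) - Nat.card K ^ (2 * n - 2) := by
  have hmul : (toLinAlgEquiv' (1 + shiftMatrix K n) - 1) * toLinAlgEquiv' (diagonal (signs K n)) =
      toLinAlgEquiv' (1 + shiftMatrix K n) - 1 := by
    rw [toLinAlgEquiv'_one_add_shiftMatrix_sub_one, ← map_mul, shiftMatrix_mul_diagonal_signs]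
  rw [ncard_fixed_not_fixed_points_mul toLinAlgEquiv'_one_add_shiftMatrix_sub_one_sq hmul
    injective_toLinAlgEquiv'_diagonal_signs hσ hτ]
  exact ncard_diagonal_signs_fixed_not_shift_fixed h2 hn

end Induces

end Induced

end Matrices

lemma eq_div_div_of_mul_eq_pow_sub_pow {b d c n : ℕ} (hb : 0 < b) (hd : 0 < d) (hn : 1 ≤ n)
    (h : c * d = b ^ (3 * n - 2) - b ^ (2 * n - 2)) :
    c = (b ^ (3 * n) - b ^ (2 * n)) / d / b ^ 2 := by
  have hmul : b ^ (3 * n) - b ^ (2 * n) = c * b ^ 2 * d := by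
    rw [mul_right_comm, h, Nat.sub_mul, ← pow_add, ← pow_add, Nat.sub_add_cancel (by omega),
      Nat.sub_add_cancel (by omega)]
  rw [hmul, Nat.mul_div_cancel _ hd, Nat.mul_div_cancel _ (pow_pos hb 2)]

open Matrix in
open scoped LinearAlgebra.Projectivization in
theorem q_fixes_exactly_one_over_p_squared_of_v_orbits_general
    {K : Type*} [Field K] [Finite K] (p n : ℕ) [CharP K p] (hodd : Odd p) (hn : 3 ≤ n)
    (v q : Matrix (Fin (3 * n)) (Fin (3 * n)) K)
    (hv : ∀ i j : Fin (3 * n), v i j =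
      if i = j then 1 else if (i : ℕ) < n ∧ (j : ℕ) = (i : ℕ) + n then 1 else 0)
    (hq : ∀ i j : Fin (3 * n), q i j =
      if i = j then (if (i : ℕ) = 2 * n + 1 ∨ (i : ℕ) = 2 * n + 2 then -1 else 1) else 0)
    (σv σq : Equiv.Perm (ℙ K (Fin (3 * n) → K)))
    (hσv : ∀ (w : Fin (3 * n) → K) (hw : w ≠ 0) (hvw : v.mulVec w ≠ 0),
      σv (Projectivization.mk K w hw) = Projectivization.mk K (v.mulVec w) hvw)
    (hσq : ∀ (w : Fin (3 * n) → K) (hw : w ≠ 0) (hqw : q.mulVec w ≠ 0),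
      σq (Projectivization.mk K w hw) = Projectivization.mk K (q.mulVec w) hqw) :
    Nat.card {O : Set (ℙ K (Fin (3 * n) → K)) |
        (∃ x, σv x ≠ x ∧ O = Set.range fun k : ℤ => (σv ^ k) x) ∧ ∀ x ∈ O, σq x = x} =
      (Nat.card K ^ (3 * n) - Nat.card K ^ (2 * n)) / (p * (Nat.card K - 1)) / Nat.card K ^ 2 ∧
    ∀ O : Set (ℙ K (Fin (3 * n) → K)),
      (∃ x, σv x ≠ x ∧ O = Set.range fun k : ℤ => (σv ^ k) x) →
      (¬∀ x ∈ O, σq x = x) →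
        (σq '' O ≠ O ∧
          ∃ y, σv y ≠ y ∧ σq '' O = Set.range fun k : ℤ => (σv ^ k) y) := by
  have : Fact p.Prime := ⟨CharP.char_is_prime K p⟩
  have : NeZero n := ⟨by omega⟩
  obtain rfl : v = 1 + shiftMatrix K n := by
    ext i j
    simp only [hv, shiftMatrix, Matrix.add_apply, one_apply, of_apply]
    split_ifs <;> grind
  obtain rfl : q = diagonal (signs K n) := by
    ext i j
    rw [hq, diagonal_apply, signs]
  have hσ : Induces (toLinAlgEquiv' (1 + shiftMatrix K n)) σv := hσv
  have hτ : Induces (toLinAlgEquiv' (diagonal (signs K n))) σq := hσq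
  have hσp : σv ^ p = 1 := hσ.one_add_shiftMatrix_pow_eq_one
  have hcomm : Commute σv σq := hσ.commute_of_one_add_shiftMatrix_of_diagonal_signs hτ
  have h2 : (2 : K) ≠ 0 := Ring.two_ne_zero (by rw [ringChar.eq K p]; grind)
  constructor
  · refine eq_div_div_of_mul_eq_pow_sub_pow Nat.card_pos
      (Nat.mul_pos hodd.pos (Nat.sub_pos_of_lt Finite.one_lt_card)) (by omega) ?_
    rw [← hσ.ncard_diagonal_signs_fixed_not_shift_fixed_mul h2 hn hτ,
      ← ncard_fixed_orbits_mul hcomm hσp, mul_assoc]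
    rfl
  · exact fun O hO hfix =>
      ⟨IsNontrivialOrbit.image_ne hO hcomm hσp (hτ.coprime_orderOf_diagonal_signs hodd) hfix,
        IsNontrivialOrbit.image_of_commute hO hcomm⟩

open scoped LinearAlgebra.Projectivization in
/-- **Lemma (Kassabov–Nikolov).**  Let `p` be an odd prime, `n ≥ 3`, and in
`SL_{3n}(F_p)` let `v = Id + Σ_{i=1}^n E_{i,n+i}` and let `q` be the diagonal matrix with
all diagonal entries `1` except `-1` in positions `2n+2` and `2n+3` (written below with
`0`-indexed rows and columns).  Let `σv`, `σq` be the permutations induced by `v`, `q` on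
the projective space `P` of `F_p^{3n}`.  Among the `m = (p^{3n} - p^{2n})/(p(p-1))`
nontrivial (length `p`) orbits of `σv`, exactly `m/p²` are fixed pointwise by `σq`, and
`σq` maps each of the remaining orbits onto a different orbit. -/
theorem q_fixes_exactly_one_over_p_squared_of_v_orbits
    (p n : ℕ) [Fact p.Prime] (hodd : Odd p) (hn : 3 ≤ n)
    (v q : Matrix (Fin (3 * n)) (Fin (3 * n)) (ZMod p))
    (hv : ∀ i j : Fin (3 * n), v i j =
      if i = j then 1 else if (i : ℕ) < n ∧ (j : ℕ) = (i : ℕ) + n then 1 else 0)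
    (hq : ∀ i j : Fin (3 * n), q i j =
      if i = j then (if (i : ℕ) = 2 * n + 1 ∨ (i : ℕ) = 2 * n + 2 then -1 else 1) else 0)
    (σv σq : Equiv.Perm (ℙ (ZMod p) (Fin (3 * n) → ZMod p)))
    (hσv : ∀ (w : Fin (3 * n) → ZMod p) (hw : w ≠ 0) (hvw : v.mulVec w ≠ 0),
      σv (Projectivization.mk (ZMod p) w hw) =
        Projectivization.mk (ZMod p) (v.mulVec w) hvw)
    (hσq : ∀ (w : Fin (3 * n) → ZMod p) (hw : w ≠ 0) (hqw : q.mulVec w ≠ 0),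
      σq (Projectivization.mk (ZMod p) w hw) =
        Projectivization.mk (ZMod p) (q.mulVec w) hqw) :
    Nat.card {O : Set (ℙ (ZMod p) (Fin (3 * n) → ZMod p)) |
        (∃ x, σv x ≠ x ∧ O = Set.range fun k : ℤ => (σv ^ k) x) ∧
          ∀ x ∈ O, σq x = x} =
      (p ^ (3 * n) - p ^ (2 * n)) / (p * (p - 1)) / p ^ 2 ∧
    ∀ O : Set (ℙ (ZMod p) (Fin (3 * n) → ZMod p)),
      (∃ x, σv x ≠ x ∧ O = Set.range fun k : ℤ => (σv ^ k) x) →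
      (¬∀ x ∈ O, σq x = x) →
        (σq '' O ≠ O ∧
          ∃ y, σv y ≠ y ∧ σq '' O = Set.range fun k : ℤ => (σv ^ k) y) := by
  simpa only [Nat.card_zmod] using
    q_fixes_exactly_one_over_p_squared_of_v_orbits_general p n hodd hn v q hv hq σv σq hσv hσq
end
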